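/- In the online Ramsey game with targets red C₄ and blue P₆, consider the position in which the five edges v₁v₂, v₂v₃, v₃v₄, v₄v₅, v₅v₆ of a path on six distinct vertices have been colored blue, red, blue, red, blue respectively (case B9). From this position Builder can force a red copy of C₄ or a blue copy of P₆ within at most 6 additional rounds, so within at most 11 rounds in total. -/

import Mathlib

open SimpleGraph

/-- The set `S` of edges of the infinite complete graph on `ℕ` contains a copy of
the graph `G`: there is an injective map of the vertices of `G` into `ℕ` sending
every edge of `G` into `S`. -/
def HasCopy {V : Type*} (G : SimpleGraph V) (S : Set (Sym2 ℕ)) : Prop :=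
  ∃ f : V → ℕ, Function.Injective f ∧ ∀ a b, G.Adj a b → s(f a, f b) ∈ S

/-- `BuilderWinsIn G H R B r` means: in the online Ramsey game with targets a red copy
of `G` and a blue copy of `H`, from the position in which the edges in `R` have been
colored red and the edges in `B` have been colored blue, Builder has a strategy that
guarantees, against every Painter strategy, that within at most `r` further rounds the
colored edges contain a red copy of `G` or a blue copy of `H`.  (In each round Builder
chooses a previously unchosen non-loop edge of the infinite complete graph on `ℕ`, and
Painter immediately colors it red or blue; so Builder wins within `r + 1` rounds iff he
has already won, or he can choose an edge such that whichever color Painter gives it,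
he can win within `r` further rounds.) -/
def BuilderWinsIn {V W : Type*} (G : SimpleGraph V) (H : SimpleGraph W) :
    Set (Sym2 ℕ) → Set (Sym2 ℕ) → ℕ → Prop
  | R, B, 0 => HasCopy G R ∨ HasCopy H B
  | R, B, (r + 1) => HasCopy G R ∨ HasCopy H B ∨
      ∃ e : Sym2 ℕ, ¬ e.IsDiag ∧ e ∉ R ∧ e ∉ B ∧
        BuilderWinsIn G H (insert e R) B r ∧ BuilderWinsIn G H R (insert e B) r

/-- The online size Ramsey number `ř(G, H)`: the least `t` such that, starting from the
empty position, Builder can force a red copy of `G` or a blue copy of `H` within at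
most `t` rounds. -/
noncomputable def onlineRamsey {V W : Type*} (G : SimpleGraph V) (H : SimpleGraph W) : ℕ :=
  sInf {t | BuilderWinsIn G H ∅ ∅ t}

/-- Certificates for Builder's strategy on the six vertices of the path:
a leaf exhibits a finished target, a node gives the next edge to be chosen, followed by the
continuations when Painter answers red and blue. -/
inductive Strat : Type
  | red (a b c d : Fin 6) : Strat
  | blue (a b c d e f : Fin 6) : Strat
  | node (a b : Fin 6) (ifRed ifBlue : Strat) : Strat

/-- Validity of a certificate for the position with red edges `R`, blue edges `B` and `r`
rounds left. -/
def Strat.check : Strat → List (Sym2 (Fin 6)) → List (Sym2 (Fin 6)) → ℕ → Bool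
  | .red a b c d, R, _, _ =>
      decide ([a, b, c, d].Nodup ∧ s(a, b) ∈ R ∧ s(b, c) ∈ R ∧ s(c, d) ∈ R ∧ s(d, a) ∈ R)
  | .blue a b c d e f, _, B, _ =>
      decide ([a, b, c, d, e, f].Nodup ∧ s(a, b) ∈ B ∧ s(b, c) ∈ B ∧ s(c, d) ∈ B ∧
        s(d, e) ∈ B ∧ s(e, f) ∈ B)
  | .node _ _ _ _, _, _, 0 => false
  | .node a b p q, R, B, r + 1 =>
      decide (a ≠ b ∧ s(a, b) ∉ R ∧ s(a, b) ∉ B) &&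
        (p.check (s(a, b) :: R) B r && q.check R (s(a, b) :: B) r)

/-- The edges of `ℕ` corresponding to a list of edges between the six path vertices. -/
def edgeImage (v : Fin 6 → ℕ) (L : List (Sym2 (Fin 6))) : Set (Sym2 ℕ) :=
  {e | ∃ x ∈ L, Sym2.map v x = e}

lemma edgeImage_cons (v : Fin 6 → ℕ) (x : Sym2 (Fin 6)) (L : List (Sym2 (Fin 6))) :
    edgeImage v (x :: L) = insert (Sym2.map v x) (edgeImage v L) := by
  ext e
  simp [edgeImage, eq_comm]

lemma mem_edgeImage (v : Fin 6 → ℕ) {a b : Fin 6} {L : List (Sym2 (Fin 6))}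
    (h : s(a, b) ∈ L) : s(v a, v b) ∈ edgeImage v L := ⟨_, h, rfl⟩

lemma not_mem_edgeImage (v : Fin 6 → ℕ) (hv : Function.Injective v) {x : Sym2 (Fin 6)}
    {L : List (Sym2 (Fin 6))} (h : x ∉ L) : Sym2.map v x ∉ edgeImage v L := by
  rintro ⟨y, hy, hxy⟩
  exact h (Sym2.map.injective hv hxy ▸ hy)

lemma hasCopy_cycle (v : Fin 6 → ℕ) (hv : Function.Injective v) {L : List (Sym2 (Fin 6))}
    (a b c d : Fin 6) (hn : [a, b, c, d].Nodup) (h1 : s(a, b) ∈ L) (h2 : s(b, c) ∈ L)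
    (h3 : s(c, d) ∈ L) (h4 : s(d, a) ∈ L) : HasCopy (cycleGraph 4) (edgeImage v L) := by
  refine ⟨fun i => v ([a, b, c, d].get i), hv.comp (List.nodup_iff_injective_get.1 hn), ?_⟩
  intro i j hij
  have hij' : j = i + 1 ∨ i = j + 1 := by
    revert i j; decide
  rcases hij' with rfl | rfl
  · fin_cases i
    exacts [mem_edgeImage v h1, mem_edgeImage v h2, mem_edgeImage v h3, mem_edgeImage v h4]
  · rw [Sym2.eq_swap]
    fin_cases j
    exacts [mem_edgeImage v h1, mem_edgeImage v h2, mem_edgeImage v h3, mem_edgeImage v h4]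

lemma hasCopy_path (v : Fin 6 → ℕ) (hv : Function.Injective v) {L : List (Sym2 (Fin 6))}
    (a b c d e f : Fin 6) (hn : [a, b, c, d, e, f].Nodup) (h1 : s(a, b) ∈ L)
    (h2 : s(b, c) ∈ L) (h3 : s(c, d) ∈ L) (h4 : s(d, e) ∈ L) (h5 : s(e, f) ∈ L) :
    HasCopy (pathGraph 6) (edgeImage v L) := by
  refine ⟨fun i => v ([a, b, c, d, e, f].get i), hv.comp (List.nodup_iff_injective_get.1 hn), ?_⟩
  have key : ∀ i j : Fin 6, i.val + 1 = j.val →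
      s(v ([a, b, c, d, e, f].get i), v ([a, b, c, d, e, f].get j)) ∈ edgeImage v L := by
    intro i j hij
    fin_cases i <;> fin_cases j <;> first
      | (exfalso; revert hij; decide)
      | exact mem_edgeImage v h1
      | exact mem_edgeImage v h2
      | exact mem_edgeImage v h3
      | exact mem_edgeImage v h4
      | exact mem_edgeImage v h5
  intro i j hij
  rcases pathGraph_adj.1 hij with h | h
  · exact key i j h
  · rw [Sym2.eq_swap]
    exact key j i h

lemma wins_of_hasCopy {V W : Type*} {G : SimpleGraph V} {H : SimpleGraph W}
    {R B : Set (Sym2 ℕ)} (h : HasCopy G R ∨ HasCopy H B) (r : ℕ) :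
    BuilderWinsIn G H R B r := by
  cases r with
  | zero => exact h
  | succ r => exact h.elim Or.inl (fun h => Or.inr (Or.inl h))

/-- A valid certificate yields a winning strategy. -/
lemma Strat.sound (v : Fin 6 → ℕ) (hv : Function.Injective v) (t : Strat) :
    ∀ (R B : List (Sym2 (Fin 6))) (r : ℕ), t.check R B r = true →
      BuilderWinsIn (cycleGraph 4) (pathGraph 6) (edgeImage v R) (edgeImage v B) r := by
  induction t with
  | red a b c d =>
    intro R B r h
    simp only [Strat.check, decide_eq_true_eq] at h
    obtain ⟨hn, h1, h2, h3, h4⟩ := h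
    exact wins_of_hasCopy (Or.inl (hasCopy_cycle v hv a b c d hn h1 h2 h3 h4)) r
  | blue a b c d e f =>
    intro R B r h
    simp only [Strat.check, decide_eq_true_eq] at h
    obtain ⟨hn, h1, h2, h3, h4, h5⟩ := h
    exact wins_of_hasCopy (Or.inr (hasCopy_path v hv a b c d e f hn h1 h2 h3 h4 h5)) r
  | node a b p q ihp ihq =>
    intro R B r h
    cases r with
    | zero => simp [Strat.check] at h
    | succ r =>
      simp only [Strat.check, Bool.and_eq_true, decide_eq_true_eq] at h
      obtain ⟨⟨hab, hR, hB⟩, hp, hq⟩ := h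
      refine Or.inr (Or.inr ⟨Sym2.map v s(a, b), ?_, not_mem_edgeImage v hv hR,
        not_mem_edgeImage v hv hB, ?_, ?_⟩)
      · simpa using fun h => hab (hv h)
      · rw [← edgeImage_cons]
        exact ihp _ _ _ hp
      · rw [← edgeImage_cons]
        exact ihq _ _ _ hq

/-- The explicit strategy. -/
def strategyB9 : Strat :=
  (.node 0 2
  (.node 0 3
  (.node 1 3
  (.red 0 2 1 3) (.node 0 4
  (.node 1 4
  (.red 0 2 1 4) (.node 2 4
  (.red 0 2 4 3) (.blue 0 1 3 2 4 5))) (.blue 2 3 1 0 4 5))) (.node 1 3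
  (.node 0 4
  (.node 1 4
  (.red 0 2 1 4) (.blue 2 3 0 1 4 5)) (.node 1 4
  (.node 2 4
  (.red 1 2 4 3) (.blue 1 0 3 2 4 5)) (.blue 2 3 0 1 4 5))) (.node 0 4
  (.node 2 4
  (.node 1 4
  (.red 0 2 1 4) (.blue 2 3 0 1 4 5)) (.blue 0 1 3 2 4 5)) (.blue 2 3 1 0 4 5)))) (.node 0 3
  (.node 1 4
  (.node 1 5
  (.node 1 3
  (.node 3 5
  (.red 1 4 3 5) (.blue 1 0 2 3 5 4)) (.node 3 5
  (.red 1 4 3 5) (.blue 1 0 2 3 5 4))) (.blue 3 2 0 1 5 4)) (.blue 3 2 0 1 4 5)) (.node 1 4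
  (.node 2 4
  (.node 1 5
  (.node 2 5
  (.red 1 4 2 5) (.blue 1 0 3 2 5 4)) (.blue 2 3 0 1 5 4)) (.blue 1 0 3 2 4 5)) (.blue 2 3 0 1 4 5))))

/-- Case `B9`: in the online Ramsey game with targets red `C₄` and blue `P₆`,
from the position in which the five edges `v₁v₂, v₂v₃, v₃v₄, v₄v₅, v₅v₆` of a path on
six distinct vertices have been colored blue, red, blue, red, blue respectively,
Builder can force a red copy of `C₄` or a blue copy of `P₆` within at most 6 additional
rounds (so within at most 11 rounds in total). -/
theorem builder_wins_case_B9 (v : Fin 6 → ℕ) (hv : Function.Injective v) :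
    BuilderWinsIn (cycleGraph 4) (pathGraph 6)
      {s(v 1, v 2), s(v 3, v 4)}
      {s(v 0, v 1), s(v 2, v 3), s(v 4, v 5)} 6 := by
  have h := strategyB9.sound v hv [s(1, 2), s(3, 4)] [s(0, 1), s(2, 3), s(4, 5)] 6
    (by set_option maxRecDepth 100000 in decide)
  have h0 : edgeImage v [] = ∅ := by
    ext e
    simp [edgeImage]
  simpa only [edgeImage_cons, h0, Sym2.map_mk, insert_empty_eq] using h
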